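/- Let G be a fair complete tripartite graph on an even number of vertices whose edges are coloured red and blue. Then there exist a red connected matching and a blue connected matching which are vertex-disjoint and together cover all vertices of G (either matching may be empty). -/

import Mathlib

open SimpleGraph Set

/- Convention: colour `true` is red, colour `false` is blue. -/

/-- The subgraph of `G` consisting of the edges of colour `b`. -/
def monoSubgraph {V : Type*} (G : SimpleGraph V) (c : Sym2 V → Bool) (b : Bool) :
    SimpleGraph V :=
  SimpleGraph.fromEdgeSet {e | e ∈ G.edgeSet ∧ c e = b}

/-- `S` is the vertex set of a (possibly empty, possibly trivial) path of `G`
all of whose edges have colour `b`. -/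
def IsMonoPathSet {V : Type*} (G : SimpleGraph V) (c : Sym2 V → Bool) (b : Bool)
    (S : Set V) : Prop :=
  S = ∅ ∨ ∃ (u v : V) (p : G.Walk u v), p.IsPath ∧ (∀ e ∈ p.edges, c e = b) ∧
    S = {x | x ∈ p.support}

/-- `S` is the vertex set of a (possibly degenerate: empty, single vertex or single edge)
cycle of `G` all of whose edges have colour `b`. -/
def IsMonoCycleSet {V : Type*} (G : SimpleGraph V) (c : Sym2 V → Bool) (b : Bool)
    (S : Set V) : Prop :=
  S = ∅ ∨ (∃ v, S = {v}) ∨ (∃ u v, G.Adj u v ∧ c s(u, v) = b ∧ S = {u, v}) ∨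
    ∃ (v : V) (p : G.Walk v v), p.IsCycle ∧ (∀ e ∈ p.edges, c e = b) ∧
      S = {x | x ∈ p.support}

/-- `M` is a matching of `G` in colour `b` which is connected, i.e. all its edges lie in one
connected component of the subgraph formed by the edges of colour `b`. -/
def IsConnMatching {V : Type*} (G : SimpleGraph V) (c : Sym2 V → Bool) (b : Bool)
    (M : Set (Sym2 V)) : Prop :=
  (∀ e ∈ M, e ∈ G.edgeSet ∧ c e = b) ∧
  (∀ e ∈ M, ∀ f ∈ M, e ≠ f → ∀ x, x ∈ e → x ∉ f) ∧
  (∀ e ∈ M, ∀ f ∈ M, ∀ x, x ∈ e → ∀ y, y ∈ f → (monoSubgraph G c b).Reachable x y)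

/-- The set of vertices covered by a set of edges. -/
def matchSupport {V : Type*} (M : Set (Sym2 V)) : Set V := {x | ∃ e ∈ M, x ∈ e}

/-- The colouring `c` of the (bipartite, with classes `U` and `W`) graph `G` is a split
colouring: `U = A ∪ B`, `W = C ∪ D`, the edges between `A,C` and between `B,D` are blue
(`false`), and the edges between `A,D` and between `B,C` are red (`true`). -/
def IsSplitColouring {V : Type*} (G : SimpleGraph V) (c : Sym2 V → Bool)
    (U W : Set V) : Prop :=
  ∃ A B C D : Set V,
    A ∪ B = U ∧ Disjoint A B ∧ C ∪ D = W ∧ Disjoint C D ∧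
    (∀ u v, G.Adj u v →
      (((u ∈ A ∧ v ∈ C) ∨ (u ∈ C ∧ v ∈ A) ∨ (u ∈ B ∧ v ∈ D) ∨ (u ∈ D ∧ v ∈ B)) →
        c s(u, v) = false)) ∧
    (∀ u v, G.Adj u v →
      (((u ∈ A ∧ v ∈ D) ∨ (u ∈ D ∧ v ∈ A) ∨ (u ∈ B ∧ v ∈ C) ∨ (u ∈ C ∧ v ∈ B)) →
        c s(u, v) = true))

/-- The colouring `c` of `G` is `δ`-close to a split colouring: one can delete at most
`δ|E(G)|` edges so that the remaining graph is bipartite and the colouring on it is a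
split colouring. -/
def CloseToSplit {V : Type*} (G : SimpleGraph V) (c : Sym2 V → Bool) (δ : ℝ) : Prop :=
  ∃ F : Set (Sym2 V), F ⊆ G.edgeSet ∧ (F.ncard : ℝ) ≤ δ * (G.edgeSet.ncard : ℝ) ∧
    ∃ U W : Set V, U ∪ W = Set.univ ∧ Disjoint U W ∧
      (∀ u v, (G.deleteEdges F).Adj u v → ((u ∈ U ∧ v ∈ W) ∨ (u ∈ W ∧ v ∈ U))) ∧
      IsSplitColouring (G.deleteEdges F) c U W

/-!
A perfect matching of `G` is a fixed-point-free involution, and it can be modified by exchanging the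
partners of two of its edges. If an unwanted edge `x y` lies inside a set `S` of at most half of the
vertices, then by counting some matching edge `u v` avoids `S`, so one can exchange partners between
the two, provided that the new edges `x u` and `y v` (or `x v` and `y u`) are wanted.

In a complete multipartite graph this applies twice. Taking `S` to be a partition class turns an
arbitrary pairing of the vertices into a perfect matching of `G`. Taking `S` to be any component of
a colour `B` other than a largest one moves all `B`-edges of the matching into the largest
component: an edge of `G` leaving a component of `B` is never in `B`. So one colour can always be
made connected, and it remains to see that the other colour may be assumed to have all its edges in
one component. If red has edges `x y` and `u v` in different components, then every vertex is joined
in blue to one of these two edges, and a common neighbour of `x` and `y` helps to connect blue.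
-/

/-- A perfect matching of `G`, encoded as the involution that sends each vertex to its partner. -/
structure IsPartnerMap {V : Type*} (G : SimpleGraph V) (σ : V → V) : Prop where
  involutive : σ.Involutive
  adj : ∀ v, G.Adj v (σ v)

/-- The edges of colour `a` in the perfect matching given by the partner map `σ`. -/
def partnerEdges {V : Type*} (c : Sym2 V → Bool) (σ : V → V) (a : Bool) : Set (Sym2 V) :=
  {e | ∃ v, e = s(v, σ v) ∧ c e = a}

/-- The partner map obtained from `σ` by pairing `x` with `u` and `σ x` with `σ u`. It is the
conjugate of `σ` by a transposition, hence again an involution. -/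
def exchangePartners {V : Type*} [DecidableEq V] (σ : V → V) (x u : V) : V → V :=
  Equiv.swap (σ x) u ∘ σ ∘ Equiv.swap (σ x) u

/-- The graph `G` with the edges of `B` outside the component `C` of `B` removed. -/
def confineTo {V : Type*} (G : SimpleGraph V) {B : SimpleGraph V} (C : B.ConnectedComponent) :
    SimpleGraph V where
  Adj x y := G.Adj x y ∧ (B.Adj x y → x ∈ C.supp)
  symm := ⟨fun _ _ h ↦ ⟨h.1.symm, fun hB ↦ (C.mem_supp_congr_adj hB).2 (h.2 hB.symm)⟩⟩
  loopless := ⟨fun _ h ↦ h.1.ne rfl⟩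

section Exchange

variable {V : Type*} {σ : V → V} {x u : V}

lemma exists_isPartnerMap_top [Finite V] (heven : Even (Nat.card V)) :
    ∃ σ : V → V, IsPartnerMap ⊤ σ := by
  obtain ⟨m, hm⟩ := heven
  obtain ⟨e⟩ : Nonempty (V ≃ Fin m ⊕ Fin m) := Finite.card_eq.1 (by simp [hm])
  refine ⟨fun v ↦ e.symm (e v).swap, fun v ↦ by simp, fun v hv ↦ ?_⟩
  have hswap : e v = (e v).swap := by simpa using congrArg e hv
  cases hev : e v <;> simp [hev] at hswap

lemma exchangePartners_involutive [DecidableEq V] (hσ : σ.Involutive) (x u : V) :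
    (exchangePartners σ x u).Involutive := fun v ↦ by
  simp [exchangePartners, hσ _]

lemma exists_notMem_and_apply_notMem [Finite V] (hσ : σ.Involutive) {S : Set V}
    (hx : x ∈ S) (hσx : σ x ∈ S) (hS : 2 * S.ncard ≤ Nat.card V) : ∃ u, u ∉ S ∧ σ u ∉ S := by
  have hinter : 0 < (S ∩ σ '' S).ncard := (ncard_pos).2 ⟨x, hx, σ x, hσx, hσ x⟩
  have hunion := ncard_union_add_ncard_inter S (σ '' S)
  rw [ncard_image_of_injective S hσ.injective] at hunion
  obtain ⟨u, hu⟩ : ∃ u, u ∉ S ∪ σ '' S := by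
    rw [← ne_univ_iff_exists_notMem]
    intro huniv
    rw [huniv, ncard_univ] at hunion
    omega
  exact ⟨u, fun h ↦ hu (.inl h), fun h ↦ hu (.inr ⟨σ u, h, hσ u⟩)⟩

namespace IsPartnerMap

variable {H K : SimpleGraph V}

lemma exchangePartners_apply_self [DecidableEq V] (hσ : IsPartnerMap H σ) (hxu : x ≠ u) :
    exchangePartners σ x u x = u := by
  simp [exchangePartners, Equiv.swap_apply_of_ne_of_ne (hσ.adj x).ne hxu]

lemma adj_exchangePartners_or_eq [DecidableEq V] (hσ : IsPartnerMap H σ) (hxu : K.Adj x u)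
    (hσxu : K.Adj (σ x) (σ u)) (w : V) :
    K.Adj w (exchangePartners σ x u w) ∨ exchangePartners σ x u w = σ w := by
  have hx : Equiv.swap (σ x) u x = x := Equiv.swap_apply_of_ne_of_ne (hσ.adj x).ne hxu.ne
  have hσu : Equiv.swap (σ x) u (σ u) = σ u :=
    Equiv.swap_apply_of_ne_of_ne hσxu.ne' (hσ.adj u).ne'
  have hinv := hσ.involutive
  rcases eq_or_ne w (σ x) with rfl | hwσx
  · left; simpa [exchangePartners, hσu] using hσxu
  rcases eq_or_ne w u with rfl | hwu
  · left; simpa [exchangePartners, hinv x, hx] using hxu.symm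
  rcases eq_or_ne w x with rfl | hwx
  · left; rwa [hσ.exchangePartners_apply_self hxu.ne]
  rcases eq_or_ne w (σ u) with rfl | hwσu
  · left; simpa [exchangePartners, hinv u, hσu] using hσxu.symm
  right
  have hσw : Equiv.swap (σ x) u (σ w) = σ w :=
    Equiv.swap_apply_of_ne_of_ne (hinv.injective.ne hwx) fun h ↦ hwσu (hinv.eq_iff.1 h)
  simp [exchangePartners, Equiv.swap_apply_of_ne_of_ne hwσx hwu, hσw]

lemma exists_ssubset_of_exchange (hKH : K ≤ H) (hσ : IsPartnerMap H σ)
    (hx : ¬K.Adj x (σ x)) (hxu : K.Adj x u) (hσxu : K.Adj (σ x) (σ u)) :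
    ∃ τ, IsPartnerMap H τ ∧ {v | ¬K.Adj v (τ v)} ⊂ {v | ¬K.Adj v (σ v)} := by
  classical
  have hτ := hσ.adj_exchangePartners_or_eq hxu hσxu
  refine ⟨exchangePartners σ x u, ⟨exchangePartners_involutive hσ.involutive x u, fun w ↦ ?_⟩,
    ssubset_iff_exists.2 ⟨fun w hw ↦ ?_, x, hx, fun hx' ↦ hx' ?_⟩⟩
  · exact (hτ w).elim (hKH ·) (fun h ↦ h ▸ hσ.adj w)
  · exact (hτ w).elim (absurd · hw) (fun h ↦ by rwa [mem_ofPred_eq, h] at hw)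
  · rwa [hσ.exchangePartners_apply_self hxu.ne]

lemma exists_of_exchange [Finite V] (hKH : K ≤ H) (hσ : IsPartnerMap H σ)
    (hexch : ∀ x y, H.Adj x y → ¬K.Adj x y → ∃ S : Set V, x ∈ S ∧ y ∈ S ∧
      2 * S.ncard ≤ Nat.card V ∧ ∀ u v, u ∉ S → v ∉ S → H.Adj u v →
        K.Adj x u ∧ K.Adj y v ∨ K.Adj x v ∧ K.Adj y u) :
    ∃ τ, IsPartnerMap K τ := by
  obtain ⟨τ, hτ, hmin⟩ := exists_minimalFor_of_wellFoundedLT (IsPartnerMap H)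
    (fun τ ↦ {v | ¬K.Adj v (τ v)}) ⟨σ, hσ⟩
  refine ⟨τ, hτ.involutive, fun x ↦ by_contra fun hx ↦ ?_⟩
  obtain ⟨S, hxS, hτxS, hS, hcross⟩ := hexch x (τ x) (hτ.adj x) hx
  obtain ⟨u, hxu, hτxu⟩ : ∃ u, K.Adj x u ∧ K.Adj (τ x) (τ u) := by
    obtain ⟨u, hu, hτu⟩ := exists_notMem_and_apply_notMem hτ.involutive hxS hτxS hS
    rcases hcross u (τ u) hu hτu (hτ.adj u) with h | h
    · exact ⟨u, h⟩
    · exact ⟨τ u, by rwa [hτ.involutive u]⟩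
  obtain ⟨τ', hτ', hlt⟩ := hτ.exists_ssubset_of_exchange hKH hx hxu hτxu
  exact hlt.not_subset (hmin hτ' hlt.subset)

end IsPartnerMap

end Exchange

section CompleteMultipartite

variable {V : Type*} {G : SimpleGraph V} {x y u v : V}

lemma isCompleteMultipartite_of_adj_iff_ne {ι : Type*} {f : V → ι}
    (hG : ∀ x y, G.Adj x y ↔ f x ≠ f y) : G.IsCompleteMultipartite :=
  ⟨fun _ _ _ hxy hyz ↦ by simp_all⟩

lemma not_cliqueFree_of_surjective {n : ℕ} {f : V → Fin n} (hf : f.Surjective)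
    (hG : ∀ x y, G.Adj x y ↔ f x ≠ f y) : ¬G.CliqueFree n :=
  (not_cliqueFree_iff_top_isContained n).2
    ⟨⟨Function.surjInv hf, by simp [hG, Function.surjInv_eq hf]⟩, Function.injective_surjInv hf⟩

lemma adj_or_adj_of_adj (hG : G.IsCompleteMultipartite) (hxy : G.Adj x y) (p : V) :
    G.Adj x p ∨ G.Adj y p := by
  by_contra! h
  exact hG.trans x p y h.1 (fun hpy ↦ h.2 hpy.symm) hxy

lemma adj_and_adj_or_of_adj (hG : G.IsCompleteMultipartite) (hxy : G.Adj x y) (huv : G.Adj u v) :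
    G.Adj x u ∧ G.Adj y v ∨ G.Adj x v ∧ G.Adj y u := by
  have hu := adj_or_adj_of_adj hG hxy u
  have hv := adj_or_adj_of_adj hG hxy v
  have hx := adj_or_adj_of_adj hG huv x
  have hy := adj_or_adj_of_adj hG huv y
  rw [G.adj_comm u, G.adj_comm v] at hx hy
  tauto

lemma exists_common_adj (hG : G.IsCompleteMultipartite) (htri : ¬G.CliqueFree 3) (x y : V) :
    ∃ z, G.Adj x z ∧ G.Adj y z := by
  classical
  obtain ⟨s, hs⟩ := not_forall_not.1 htri
  obtain ⟨a, b, c, hab, hac, hbc, -⟩ := is3Clique_iff.1 hs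
  have h (p : V) : (G.Adj p a ∨ G.Adj p b) ∧ (G.Adj p a ∨ G.Adj p c) ∧ (G.Adj p b ∨ G.Adj p c) := by
    simp only [G.adj_comm p]
    exact ⟨adj_or_adj_of_adj hG hab p, adj_or_adj_of_adj hG hac p, adj_or_adj_of_adj hG hbc p⟩
  have hx := h x
  have hy := h y
  by_contra! hz
  have ha := hz a
  have hb := hz b
  have hc := hz c
  tauto

variable [Finite V]

lemma exists_isPartnerMap_of_fair (hG : G.IsCompleteMultipartite)
    (hfair : ∀ v, 2 * {w | ¬G.Adj v w}.ncard ≤ Nat.card V) (heven : Even (Nat.card V)) :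
    ∃ σ, IsPartnerMap G σ := by
  obtain ⟨σ, hσ⟩ := exists_isPartnerMap_top heven
  refine hσ.exists_of_exchange le_top fun x y _ hxy ↦ ⟨{w | ¬G.Adj x w}, G.irrefl, hxy, hfair x,
    fun u v hu hv _ ↦ .inl ⟨not_not.1 hu, ?_⟩⟩
  exact (adj_or_adj_of_adj hG (not_not.1 hv) y).resolve_left hxy |>.symm

lemma two_mul_ncard_supp_le_of_ne {B : SimpleGraph V} {C D : B.ConnectedComponent} (hne : D ≠ C)
    (hle : D.supp.ncard ≤ C.supp.ncard) : 2 * D.supp.ncard ≤ Nat.card V := by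
  have hdisj : Disjoint D.supp C.supp := pairwise_disjoint_supp_connectedComponent B hne
  have hunion := ncard_union_eq hdisj
  have hcard := ncard_le_card (D.supp ∪ C.supp)
  omega

lemma exists_isPartnerMap_forall_reachable [Nonempty V] (hG : G.IsCompleteMultipartite)
    (hfair : ∀ v, 2 * {w | ¬G.Adj v w}.ncard ≤ Nat.card V) (heven : Even (Nat.card V))
    (B : SimpleGraph V) :
    ∃ σ, IsPartnerMap G σ ∧ ∀ x y, B.Adj x (σ x) → B.Adj y (σ y) → B.Reachable x y := by
  obtain ⟨C, hC⟩ := Finite.exists_max fun C : B.ConnectedComponent ↦ C.supp.ncard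
  obtain ⟨σ, hσ⟩ := exists_isPartnerMap_of_fair hG hfair heven
  suffices ∃ τ, IsPartnerMap (confineTo G C) τ by
    obtain ⟨τ, hinv, hτ⟩ := this
    exact ⟨τ, ⟨hinv, fun v ↦ (hτ v).1⟩, fun x y hx hy ↦
      ConnectedComponent.exact (((hτ x).2 hx).trans ((hτ y).2 hy).symm)⟩
  refine hσ.exists_of_exchange (fun _ _ h ↦ h.1) fun x y hxy hconf ↦ ?_
  obtain ⟨hB, hxC⟩ : B.Adj x y ∧ x ∉ C.supp := by simpa [confineTo, hxy] using hconf
  set D := B.connectedComponentMk x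
  have hxD : x ∈ D.supp := rfl
  have hyD : y ∈ D.supp := (D.mem_supp_congr_adj hB).1 hxD
  have hleave {p q : V} (hp : p ∈ D.supp) (hq : q ∉ D.supp) (hpq : G.Adj p q) :
      (confineTo G C).Adj p q :=
    ⟨hpq, fun h ↦ absurd ((D.mem_supp_congr_adj h).1 hp) hq⟩
  refine ⟨D.supp, hxD, hyD, two_mul_ncard_supp_le_of_ne hxC (hC D), fun u v hu hv huv ↦ ?_⟩
  exact (adj_and_adj_or_of_adj hG hxy huv).imp
    (fun h ↦ ⟨hleave hxD hu h.1, hleave hyD hv h.2⟩)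
    (fun h ↦ ⟨hleave hxD hv h.1, hleave hyD hu h.2⟩)

end CompleteMultipartite

section TwoColours

variable {V : Type*} {R B : SimpleGraph V} {x y u v p : V}

lemma adj_right_of_not_reachable_left (h : (R ⊔ B).Adj x p) (hp : ¬R.Reachable x p) : B.Adj x p :=
  h.resolve_left fun hR ↦ hp hR.reachable

lemma reachable_or_reachable_of_not_reachable (hRB : (R ⊔ B).IsCompleteMultipartite)
    (hxy : R.Adj x y) (hp : ¬R.Reachable x p) : B.Reachable x p ∨ B.Reachable y p :=
  (adj_or_adj_of_adj hRB (.inl hxy) p).imp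
    (fun h ↦ (adj_right_of_not_reachable_left h hp).reachable)
    (fun h ↦ (adj_right_of_not_reachable_left h fun hyp ↦ hp (hxy.reachable.trans hyp)).reachable)

lemma preconnected_of_reachable (hRB : (R ⊔ B).IsCompleteMultipartite) (hxy : R.Adj x y)
    (huv : R.Adj u v) (hxu : ¬R.Reachable x u) (hB : B.Reachable x y) : B.Preconnected := by
  have houtside {p : V} (hp : ¬R.Reachable x p) : B.Reachable x p :=
    (reachable_or_reachable_of_not_reachable hRB hxy hp).elim id hB.trans
  have hall (p : V) : B.Reachable x p := by
    by_cases hp : R.Reachable x p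
    · have hup : ¬R.Reachable u p := fun h ↦ hxu (hp.trans h.symm)
      have hxv : ¬R.Reachable x v := fun h ↦ hxu (h.trans huv.symm.reachable)
      exact (reachable_or_reachable_of_not_reachable hRB huv hup).elim
        (houtside hxu).trans (houtside hxv).trans
    · exact houtside hp
  exact fun p q ↦ (hall p).symm.trans (hall q)

lemma reachable_or_reachable_of_adj_of_adj (hRB : (R ⊔ B).IsCompleteMultipartite)
    (htri : ¬(R ⊔ B).CliqueFree 3) (hxy : R.Adj x y) (huv : R.Adj u v)
    (hxu : ¬R.Reachable x u) : B.Reachable x y ∨ B.Reachable u v := by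
  have hyx := hxy.symm.reachable
  have hvu := huv.symm.reachable
  have hvia {p : V} (hp : ¬R.Reachable x p) (hxp : (R ⊔ B).Adj x p) (hyp : (R ⊔ B).Adj y p) :
      B.Reachable x y :=
    (adj_right_of_not_reachable_left hxp hp).reachable.trans
      (adj_right_of_not_reachable_left hyp fun h ↦ hp (hyx.symm.trans h)).symm.reachable
  obtain ⟨z, hxz, hyz⟩ := exists_common_adj hRB htri x y
  by_cases hz : R.Reachable x z
  · -- An end of `u v` not adjacent to `z` lies in the class of `z`, so it is adjacent to `x`, `y`.
    have hend {w : V} (hw : ¬R.Reachable x w) (hzw : ¬(R ⊔ B).Adj z w) : B.Reachable x y :=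
      hvia hw ((adj_or_adj_of_adj hRB hxz w).resolve_right hzw)
        ((adj_or_adj_of_adj hRB hyz w).resolve_right hzw)
    have hxv : ¬R.Reachable x v := fun h ↦ hxu (h.trans hvu)
    by_cases hzu : (R ⊔ B).Adj z u
    · by_cases hzv : (R ⊔ B).Adj z v
      · right
        exact (adj_right_of_not_reachable_left hzu fun h ↦ hxu (hz.trans h)).symm.reachable.trans
          (adj_right_of_not_reachable_left hzv fun h ↦ hxv (hz.trans h)).reachable
      · exact .inl (hend hxv hzv)
    · exact .inl (hend hxu hzu)
  · exact .inl (hvia hz hxz hyz)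

lemma forall_support_reachable_or_preconnected (hRB : (R ⊔ B).IsCompleteMultipartite)
    (htri : ¬(R ⊔ B).CliqueFree 3) :
    (∀ x ∈ R.support, ∀ u ∈ R.support, R.Reachable x u) ∨ B.Preconnected := by
  refine or_iff_not_imp_left.2 fun hR ↦ ?_
  push Not at hR
  obtain ⟨x, ⟨y, hxy⟩, u, ⟨v, huv⟩, hxu⟩ := hR
  rcases reachable_or_reachable_of_adj_of_adj hRB htri hxy huv hxu with hB | hB
  · exact preconnected_of_reachable hRB hxy huv hxu hB
  · exact preconnected_of_reachable hRB huv hxy (fun h ↦ hxu h.symm) hB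

end TwoColours

section Colouring

variable {V : Type*} {G : SimpleGraph V} {c : Sym2 V → Bool} {σ : V → V} {a : Bool}

lemma monoSubgraph_adj {x y : V} : (monoSubgraph G c a).Adj x y ↔ G.Adj x y ∧ c s(x, y) = a := by
  simp only [monoSubgraph, fromEdgeSet_adj, mem_ofPred_eq, mem_edgeSet]
  exact and_iff_left_of_imp fun h ↦ h.1.ne

lemma monoSubgraph_sup_monoSubgraph (G : SimpleGraph V) (c : Sym2 V → Bool) :
    monoSubgraph G c true ⊔ monoSubgraph G c false = G := by
  ext x y
  simp only [sup_adj, monoSubgraph_adj, ← and_or_left, Bool.eq_true_or_eq_false_self, and_true]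

lemma mk_apply_eq_of_mem (hσ : σ.Involutive) {v x : V} (hx : x ∈ s(v, σ v)) :
    s(v, σ v) = s(x, σ x) := by
  rcases Sym2.mem_iff.1 hx with rfl | rfl
  · rfl
  · rw [hσ v, Sym2.eq_swap]

lemma mem_matchSupport_partnerEdges (hσ : σ.Involutive) {x : V} :
    x ∈ matchSupport (partnerEdges c σ a) ↔ c s(x, σ x) = a := by
  constructor
  · rintro ⟨_, ⟨v, rfl, hv⟩, hx⟩
    rwa [← mk_apply_eq_of_mem hσ hx]
  · exact fun h ↦ ⟨s(x, σ x), ⟨x, rfl, h⟩, Sym2.mem_mk_left _ _⟩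

lemma IsPartnerMap.isConnMatching_partnerEdges (hσ : IsPartnerMap G σ)
    (hreach : ∀ x y, (monoSubgraph G c a).Adj x (σ x) → (monoSubgraph G c a).Adj y (σ y) →
      (monoSubgraph G c a).Reachable x y) :
    IsConnMatching G c a (partnerEdges c σ a) := by
  have hmk {v x : V} := mk_apply_eq_of_mem hσ.involutive (v := v) (x := x)
  refine ⟨?_, ?_, ?_⟩
  · rintro _ ⟨v, rfl, hv⟩
    exact ⟨hσ.adj v, hv⟩
  · rintro _ ⟨v, rfl, -⟩ _ ⟨w, rfl, -⟩ hne x hxv hxw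
    exact hne ((hmk hxv).trans (hmk hxw).symm)
  · rintro _ ⟨v, rfl, hv⟩ _ ⟨w, rfl, hw⟩ x hx y hy
    rw [hmk hx] at hv
    rw [hmk hy] at hw
    exact hreach x y (monoSubgraph_adj.2 ⟨hσ.adj x, hv⟩) (monoSubgraph_adj.2 ⟨hσ.adj y, hw⟩)

lemma exists_isPartnerMap_forall_isConnMatching [Finite V] (hG : G.IsCompleteMultipartite)
    (htri : ¬G.CliqueFree 3) (hfair : ∀ v, 2 * {w | ¬G.Adj v w}.ncard ≤ Nat.card V)
    (heven : Even (Nat.card V)) (c : Sym2 V → Bool) :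
    ∃ σ, IsPartnerMap G σ ∧ ∀ a, IsConnMatching G c a (partnerEdges c σ a) := by
  have : Nonempty V := not_isEmpty_iff.1 fun _ ↦ htri fun s hs ↦ by
    simpa [s.eq_empty_of_isEmpty] using hs.card_eq
  rcases forall_support_reachable_or_preconnected (R := monoSubgraph G c true)
    (B := monoSubgraph G c false) (by rwa [monoSubgraph_sup_monoSubgraph])
    (by rwa [monoSubgraph_sup_monoSubgraph]) with hred | hblue
  · obtain ⟨σ, hσ, hreach⟩ :=
      exists_isPartnerMap_forall_reachable hG hfair heven (monoSubgraph G c false)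
    exact ⟨σ, hσ, Bool.forall_bool.2 ⟨hσ.isConnMatching_partnerEdges hreach,
      hσ.isConnMatching_partnerEdges fun x y hx hy ↦ hred x ⟨_, hx⟩ y ⟨_, hy⟩⟩⟩
  · obtain ⟨σ, hσ, hreach⟩ :=
      exists_isPartnerMap_forall_reachable hG hfair heven (monoSubgraph G c true)
    exact ⟨σ, hσ, Bool.forall_bool.2 ⟨hσ.isConnMatching_partnerEdges fun x y _ _ ↦ hblue x y,
      hσ.isConnMatching_partnerEdges hreach⟩⟩

end Colouring

theorem stmt10_general {V : Type*} [Finite V] {G : SimpleGraph V} (hG : G.IsCompleteMultipartite)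
    (htri : ¬G.CliqueFree 3) (hfair : ∀ v, 2 * {w | ¬G.Adj v w}.ncard ≤ Nat.card V)
    (heven : Even (Nat.card V)) (c : Sym2 V → Bool) :
    ∃ MR MB : Set (Sym2 V),
      IsConnMatching G c true MR ∧ IsConnMatching G c false MB ∧
      Disjoint (matchSupport MR) (matchSupport MB) ∧
      matchSupport MR ∪ matchSupport MB = Set.univ := by
  obtain ⟨σ, hσ, hconn⟩ := exists_isPartnerMap_forall_isConnMatching hG htri hfair heven c
  refine ⟨_, _, hconn true, hconn false, disjoint_left.2 fun x hred hblue ↦ ?_,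
    eq_univ_of_forall fun x ↦ ?_⟩
  · rw [mem_matchSupport_partnerEdges hσ.involutive] at hred hblue
    simp [hred] at hblue
  · simp only [mem_union, mem_matchSupport_partnerEdges hσ.involutive,
      Bool.eq_true_or_eq_false_self]

/-- Lemma 4.1: any fair complete tripartite graph on an even number of vertices, with
red/blue-coloured edges, can be covered by a red connected matching and a blue connected
matching which are vertex-disjoint (either matching may be empty). -/
theorem stmt10 {V : Type*} [Fintype V]
    (f : V → Fin 3) (hf : Function.Surjective f)
    (G : SimpleGraph V) (hG : ∀ x y, G.Adj x y ↔ f x ≠ f y)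
    (hfair : ∀ i : Fin 3, 2 * ({v | f v = i} : Set V).ncard ≤ Fintype.card V)
    (heven : Even (Fintype.card V))
    (c : Sym2 V → Bool) :
    ∃ MR MB : Set (Sym2 V),
      IsConnMatching G c true MR ∧ IsConnMatching G c false MB ∧
      Disjoint (matchSupport MR) (matchSupport MB) ∧
      matchSupport MR ∪ matchSupport MB = Set.univ :=
  stmt10_general (isCompleteMultipartite_of_adj_iff_ne hG) (not_cliqueFree_of_surjective hf hG)
    (fun v ↦ by simpa [hG, eq_comm] using hfair (f v)) (by simpa using heven) c
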